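/- Let R₁, …, Rₙ (n ≥ 2) be axis-aligned rectangles in ℝ² all of whose corner coordinates are rational numbers. Then the optimal value δ*₁ for the L₁ distance is a rational number, and it is attained by a selection all of whose points have rational coordinates. -/

import Mathlib

open Set

/-- The `L₁` distance on `ℝ²`. -/
noncomputable def d1 (p q : ℝ × ℝ) : ℝ := |p.1 - q.1| + |p.2 - q.2|

/-- The axis-aligned rectangle `[a,b] × [c,d]`. -/
def rect (a b c d : ℝ) : Set (ℝ × ℝ) := Set.Icc a b ×ˢ Set.Icc c d

/-- The minimum pairwise distance of the points `p 0, …, p (n-1)` with respect to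
the distance function `d`. -/
noncomputable def minPairDist {n : ℕ} (d : (ℝ × ℝ) → (ℝ × ℝ) → ℝ)
    (p : Fin n → ℝ × ℝ) : ℝ :=
  sInf {x : ℝ | ∃ i j : Fin n, i ≠ j ∧ x = d (p i) (p j)}

/-- The set of values of selections from the rectangles `R i`:
the minimum pairwise distance over selections, with respect to `d`. -/
noncomputable def selVals {n : ℕ} (d : (ℝ × ℝ) → (ℝ × ℝ) → ℝ)
    (R : Fin n → Set (ℝ × ℝ)) : Set ℝ :=
  {v : ℝ | ∃ p : Fin n → ℝ × ℝ, (∀ i, p i ∈ R i) ∧ v = minPairDist d p}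

lemma exists_eps (C : ℝ → ℝ) (hC : ∀ s, 0 ≤ C s) (S : Finset ℝ) :
    ∃ ε : ℝ, 0 < ε ∧ ∀ s ∈ S, 0 < s → ε * C s < s := by
  classical
  induction S using Finset.induction_on with
  | empty => exact ⟨1, one_pos, by simp⟩
  | insert a S _ ih =>
    obtain ⟨ε, h0, h⟩ := ih
    by_cases ha : 0 < a
    · refine ⟨min ε (a / (C a + 1)), lt_min h0 (div_pos ha (by linarith [hC a])), ?_⟩
      intro s hs hpos
      rcases Finset.mem_insert.1 hs with rfl | hs
      · have h1 : 0 < C s + 1 := by linarith [hC s]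
        calc min ε (s / (C s + 1)) * C s ≤ s / (C s + 1) * C s :=
              mul_le_mul_of_nonneg_right (min_le_right _ _) (hC s)
          _ < s / (C s + 1) * (C s + 1) := by
              have := div_pos hpos h1
              nlinarith
          _ = s := by field_simp
      · exact lt_of_le_of_lt (mul_le_mul_of_nonneg_right (min_le_left _ _) (hC s)) (h s hs hpos)
    · refine ⟨ε, h0, ?_⟩
      intro s hs hpos
      rcases Finset.mem_insert.1 hs with rfl | hs
      · exact absurd hpos ha
      · exact h s hs hpos

lemma exists_lin (S : Finset ℝ) :
    ∃ f : ℝ →ₗ[ℚ] ℚ, f 1 = 1 ∧ ∀ s ∈ S, 0 < s → |(f s : ℝ) - s| < s := by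
  classical
  have hli : LinearIndepOn ℚ id ({1} : Set ℝ) := LinearIndepOn.singleton (by simp)
  let B := Module.Basis.extend hli
  let C : ℝ → ℝ := fun s => (B.repr s).sum fun _ c => |(c : ℝ)|
  have hC : ∀ s, 0 ≤ C s := fun s => Finset.sum_nonneg fun _ _ => abs_nonneg _
  obtain ⟨ε, h0, hε⟩ := exists_eps C hC S
  have hq : ∀ k, ∃ q : ℚ, |(q : ℝ) - B k| ≤ ε ∧ (B k = 1 → q = 1) := by
    intro k
    by_cases hk : B k = 1
    · exact ⟨1, by simp [hk, h0.le], fun _ => rfl⟩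
    · obtain ⟨q, h1, h2⟩ := exists_rat_btwn (show B k < B k + ε by linarith)
      exact ⟨q, by rw [abs_le]; constructor <;> linarith, fun h => absurd h hk⟩
  choose q hq1 hq2 using hq
  refine ⟨B.constr ℚ q, ?_, ?_⟩
  · have hm : (1 : ℝ) ∈ hli.extend (subset_univ _) :=
      hli.subset_extend _ (by simp)
    have hb : B ⟨1, hm⟩ = 1 := by simp [B]
    have := B.constr_basis ℚ q ⟨1, hm⟩
    rw [hb] at this
    rw [this, hq2 _ hb]
  · intro s hs hpos
    refine lt_of_le_of_lt ?_ (hε s hs hpos)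
    have e1 : ((B.constr ℚ q s : ℚ) : ℝ) = ∑ k ∈ (B.repr s).support, (B.repr s k : ℝ) * (q k : ℝ) := by
      rw [Module.Basis.constr_apply, Finsupp.sum]
      push_cast [smul_eq_mul]
      rfl
    have e2 : s = ∑ k ∈ (B.repr s).support, (B.repr s k : ℝ) * B k := by
      conv_lhs => rw [← B.linearCombination_repr s]
      rw [Finsupp.linearCombination_apply, Finsupp.sum]
      simp only [Rat.smul_def]
    have e3 : ((B.constr ℚ q s : ℚ) : ℝ) - s
        = ∑ k ∈ (B.repr s).support, (B.repr s k : ℝ) * ((q k : ℝ) - B k) := by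
      rw [e1]
      conv_lhs => rw [e2]
      simp only [mul_sub, Finset.sum_sub_distrib]
      rw [← e2]
    rw [e3]
    refine (Finset.abs_sum_le_sum_abs _ _).trans ?_
    simp only [C, Finsupp.sum, Finset.mul_sum]
    refine Finset.sum_le_sum fun k _ => ?_
    rw [abs_mul, mul_comm]
    exact mul_le_mul_of_nonneg_right (hq1 k) (abs_nonneg _)

lemma mpd_le {n : ℕ} (p : Fin n → ℝ × ℝ) (i j : Fin n) (h : i ≠ j) :
    minPairDist d1 p ≤ d1 (p i) (p j) := by
  refine csInf_le ⟨0, ?_⟩ ⟨i, j, h, rfl⟩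
  rintro x ⟨i, j, -, rfl⟩
  unfold d1
  positivity

lemma le_mpd {n : ℕ} (hn : 2 ≤ n) (p : Fin n → ℝ × ℝ) (t : ℝ)
    (h : ∀ i j : Fin n, i ≠ j → t ≤ d1 (p i) (p j)) : t ≤ minPairDist d1 p := by
  refine le_csInf ⟨_, ⟨0, by omega⟩, ⟨1, by omega⟩, by simp, rfl⟩ ?_
  rintro x ⟨i, j, hij, rfl⟩
  exact h i j hij

lemma mpd_cont {n : ℕ} (hn : 2 ≤ n) :
    Continuous (fun p : Fin n → ℝ × ℝ => minPairDist d1 p) := by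
  have hne : (Finset.univ : Finset (Fin n)).offDiag.Nonempty :=
    ⟨(⟨0, by omega⟩, ⟨1, by omega⟩), by simp⟩
  have : (fun p : Fin n → ℝ × ℝ => minPairDist d1 p)
      = fun p => (Finset.univ : Finset (Fin n)).offDiag.inf' hne
          (fun ij => d1 (p ij.1) (p ij.2)) := by
    funext p
    apply le_antisymm
    · refine Finset.le_inf' _ _ fun ij h => mpd_le p _ _ ?_
      simpa using h
    · refine le_mpd hn p _ fun i j hij => ?_
      exact Finset.inf'_le (fun ij : Fin n × Fin n => d1 (p ij.1) (p ij.2)) (b := (i, j)) (by simpa using hij)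
  rw [this]
  refine Continuous.finset_inf'_apply hne fun ij _ => ?_
  unfold d1
  fun_prop

lemma lin_abs (g : ℝ →ₗ[ℚ] ℝ) (x : ℝ) (h1 : 0 ≤ x → 0 ≤ g x) (h2 : 0 ≤ -x → 0 ≤ g (-x)) :
    |g x| = g |x| := by
  rcases le_total 0 x with h | h
  · rw [abs_of_nonneg h, abs_of_nonneg (h1 h)]
  · have := h2 (by linarith)
    rw [map_neg] at this
    rw [abs_of_nonpos h, abs_of_nonpos (by linarith), map_neg]

lemma lin_rat (g : ℝ →ₗ[ℚ] ℝ) (h : g 1 = 1) (q : ℚ) : g (q : ℝ) = q := by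
  have : (q : ℝ) = q • (1 : ℝ) := by simp [Rat.smul_def]
  rw [this, map_smul, h]

theorem stmt13 (n : ℕ) (hn : 2 ≤ n) (lo hi bo tp : Fin n → ℚ)
    (hx : ∀ i, lo i ≤ hi i) (hy : ∀ i, bo i ≤ tp i) :
    ∃ p : Fin n → ℝ × ℝ,
      (∀ i, p i ∈ rect (lo i : ℝ) (hi i : ℝ) (bo i : ℝ) (tp i : ℝ)) ∧
      (∀ i, ∃ qx qy : ℚ, p i = ((qx : ℝ), (qy : ℝ))) ∧
      IsGreatest
        (selVals d1 fun i => rect (lo i : ℝ) (hi i : ℝ) (bo i : ℝ) (tp i : ℝ))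
        (minPairDist d1 p) ∧
      ∃ q : ℚ, minPairDist d1 p = (q : ℝ) := by
  classical
  have hcomp : IsCompact (Set.pi Set.univ
      (fun i => rect (lo i : ℝ) (hi i : ℝ) (bo i : ℝ) (tp i : ℝ))) :=
    isCompact_univ_pi fun i => isCompact_Icc.prod isCompact_Icc
  have hne : (Set.pi Set.univ
      (fun i => rect (lo i : ℝ) (hi i : ℝ) (bo i : ℝ) (tp i : ℝ))).Nonempty := by
    refine ⟨fun i => ((lo i : ℝ), (bo i : ℝ)), fun i _ => ?_⟩
    have h1 : (lo i : ℝ) ≤ hi i := by exact_mod_cast hx i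
    have h2 : (bo i : ℝ) ≤ tp i := by exact_mod_cast hy i
    exact ⟨⟨le_refl _, h1⟩, ⟨le_refl _, h2⟩⟩
  obtain ⟨p, hp, hmax⟩ := hcomp.exists_isMaxOn hne (mpd_cont hn).continuousOn
  set t := minPairDist d1 p with ht
  have hmax' : ∀ p' : Fin n → ℝ × ℝ,
      (∀ i, p' i ∈ rect (lo i : ℝ) (hi i : ℝ) (bo i : ℝ) (tp i : ℝ)) →
      minPairDist d1 p' ≤ t := fun p' h => hmax (fun i _ => h i)
  let S : Finset ℝ :=
    (Finset.univ.image fun ij : Fin n × Fin n => (p ij.1).1 - (p ij.2).1) ∪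
    (Finset.univ.image fun ij : Fin n × Fin n => (p ij.1).2 - (p ij.2).2) ∪
    (Finset.univ.image fun ij : Fin n × Fin n => d1 (p ij.1) (p ij.2) - t) ∪
    (Finset.univ.image fun i : Fin n => (p i).1 - lo i) ∪
    (Finset.univ.image fun i : Fin n => hi i - (p i).1) ∪
    (Finset.univ.image fun i : Fin n => (p i).2 - bo i) ∪
    (Finset.univ.image fun i : Fin n => tp i - (p i).2)
  have key : ∀ g : ℝ →ₗ[ℚ] ℝ, g 1 = 1 → (∀ s ∈ S, 0 < s → 0 < g s) →
      (∀ i, (g (p i).1, g (p i).2) ∈ rect (lo i : ℝ) (hi i : ℝ) (bo i : ℝ) (tp i : ℝ)) ∧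
      g t ≤ minPairDist d1 (fun i => (g (p i).1, g (p i).2)) := by
    intro g g1 gpos
    have gnn : ∀ s ∈ S, 0 ≤ s → 0 ≤ g s := by
      intro s hs h
      rcases h.eq_or_lt with h | h
      · rw [← h, map_zero]
      · exact (gpos s hs h).le
    have S1 : ∀ i j, (p i).1 - (p j).1 ∈ S := fun i j => by
      simp only [S, Finset.mem_union, Finset.mem_image, Finset.mem_univ, true_and]
      exact Or.inl (Or.inl (Or.inl (Or.inl (Or.inl (Or.inl ⟨(i, j), rfl⟩)))))
    have S2 : ∀ i j, (p i).2 - (p j).2 ∈ S := fun i j => by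
      simp only [S, Finset.mem_union, Finset.mem_image, Finset.mem_univ, true_and]
      exact Or.inl (Or.inl (Or.inl (Or.inl (Or.inl (Or.inr ⟨(i, j), rfl⟩)))))
    have S3 : ∀ i j, d1 (p i) (p j) - t ∈ S := fun i j => by
      simp only [S, Finset.mem_union, Finset.mem_image, Finset.mem_univ, true_and]
      exact Or.inl (Or.inl (Or.inl (Or.inl (Or.inr ⟨(i, j), rfl⟩))))
    have S4 : ∀ i, (p i).1 - lo i ∈ S := fun i => by simp [S]
    have S5 : ∀ i, hi i - (p i).1 ∈ S := fun i => by simp [S]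
    have S6 : ∀ i, (p i).2 - bo i ∈ S := fun i => by simp [S]
    have S7 : ∀ i, tp i - (p i).2 ∈ S := fun i => by simp [S]
    constructor
    · intro i
      obtain ⟨⟨h1, h2⟩, ⟨h3, h4⟩⟩ := hp i (Set.mem_univ i)
      have a1 := gnn _ (S4 i) (sub_nonneg.2 h1)
      have a2 := gnn _ (S5 i) (sub_nonneg.2 h2)
      have a3 := gnn _ (S6 i) (sub_nonneg.2 h3)
      have a4 := gnn _ (S7 i) (sub_nonneg.2 h4)
      rw [map_sub, lin_rat g g1, sub_nonneg] at a1 a2 a3 a4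
      exact ⟨⟨a1, a2⟩, ⟨a3, a4⟩⟩
    · refine le_mpd hn _ _ fun i j hij => ?_
      have a := gnn _ (S3 i j) (sub_nonneg.2 (mpd_le p i j hij))
      rw [map_sub, sub_nonneg] at a
      refine a.trans (le_of_eq ?_)
      unfold d1
      rw [map_add, ← lin_abs g _ (gnn _ (S1 i j)), ← lin_abs g _ (gnn _ (S2 i j)), map_sub, map_sub]
      · rw [neg_sub]; exact gnn _ (S2 j i)
      · rw [neg_sub]; exact gnn _ (S1 j i)
  obtain ⟨f, f1, hf⟩ := exists_lin S
  let F : ℝ →ₗ[ℚ] ℝ := (Algebra.linearMap ℚ ℝ).comp f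
  have hF : ∀ x, F x = (f x : ℝ) := fun x => by simp [F]
  obtain ⟨k1, k2⟩ := key F (by rw [hF, f1]; simp) (fun s hs h => by
    have := abs_lt.1 (hf s hs h)
    rw [hF]; linarith)
  let G : ℝ →ₗ[ℚ] ℝ := LinearMap.id + LinearMap.id - F
  have hG : ∀ x, G x = x + x - (f x : ℝ) := fun x => by simp [G, hF]
  obtain ⟨l1, l2⟩ := key G (by rw [hG, f1]; norm_num) (fun s hs h => by
    have := abs_lt.1 (hf s hs h)
    rw [hG]; linarith)
  have m1 := hmax' _ k1
  have m2 := hmax' _ l1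
  have e1 := hF t
  have e2 := hG t
  have ft : (f t : ℝ) = t := by linarith
  have hval : minPairDist d1 (fun i => (F (p i).1, F (p i).2)) = t := by linarith
  refine ⟨fun i => (F (p i).1, F (p i).2), k1, fun i => ⟨f (p i).1, f (p i).2, by simp only [hF]⟩,
    ⟨⟨_, k1, rfl⟩, ?_⟩, f t, by rw [hval, ft]⟩
  rintro v ⟨p', hp', rfl⟩
  rw [hval]
  exact hmax' p' hp'
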